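/- (Principal eigenfunctions composed with the perturbation map are Koopman eigenfunctions of the cascade.) Assume Condition (★) in full. Fix i ∈ {1,…,n} and s_i ∈ {1,…,d_i}, and define φ : ℂ^{d_1}×⋯×ℂ^{d_n} → ℂ by φ(x_1,…,x_n) = ψ_{i,s_i}(pert_i(x_1,…,x_i)). Then for all (x_1,…,x_n), φ(Lin(x_1,…,x_n)) = λ_{i,s_i} · φ(x_1,…,x_n); i.e., ψ_{(0,…,0,s_i,0,…,0)} ∘ pert is an eigenfunction of the Koopman operator of the chained linear cascade at the eigenvalue λ_{i,s_i} of the component matrix L_i. -/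

import Mathlib

/-!
The perturbation maps intertwine the cascade with the decoupled system:
`pert_i (Lin x) = L_i (pert_i x)` (`pert_linStep`). Since `V_i⁻¹ L_i = Λ_i V_i⁻¹`, the `s`-th row of
`V_i⁻¹` is a left eigenvector of `L_i`, and the eigenfunction identity follows at once.

The intertwining is proved by strong induction on the level and rests on two facts. First,
`D_{i+1,j}` solves the Sylvester equation `L_{i+1} D - D L_j = C_i D_{i,j}` for `j ≤ i`
(`Dmat_sylvester`): in eigencoordinates the left side multiplies the `(ℓ, m)` entry by
`λ_{i+1,ℓ} - λ_{j,m}`, which is nonzero because the spectra are disjoint. Second, the definition of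
`pert` inverts to `x_i = ∑_{j ≤ i} (-1)^{i-j} D_{i,j} pert_j x` (`sum_pert`), so the coupling terms
`C_i D_{i,j} pert_j` coming from the Sylvester equation cancel `C_i x_i` exactly.
-/

open Matrix Finset Filter Topology

noncomputable section

/-- A matrix acting as a continuous linear map between Euclidean spaces. -/
def matCLM {p q : ℕ} (M : Matrix (Fin p) (Fin q) ℂ) :
    EuclideanSpace ℂ (Fin q) →L[ℂ] EuclideanSpace ℂ (Fin p) :=
  LinearMap.toContinuousLinearMap (Matrix.toEuclideanLin M)

/-- Operator norm of a matrix induced by the Euclidean norms. -/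
def opN {p q : ℕ} (M : Matrix (Fin p) (Fin q) ℂ) : ℝ := ‖matCLM M‖

/-- One step of the chained linear cascade (levels indexed from `0`). -/
def LinStep {d : ℕ → ℕ} (L : ∀ i, Matrix (Fin (d i)) (Fin (d i)) ℂ)
    (C : ∀ i, Matrix (Fin (d (i+1))) (Fin (d i)) ℂ)
    (x : ∀ i, EuclideanSpace ℂ (Fin (d i))) (i : ℕ) :
    EuclideanSpace ℂ (Fin (d i)) :=
  match i with
  | 0 => matCLM (L 0) (x 0)
  | (i+1) => matCLM (L (i+1)) (x (i+1)) + matCLM (C i) (x i)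

/-- The matrices `D_{i,j}` of the paper (levels indexed from `0`). -/
def Dmat {d : ℕ → ℕ} (L : ∀ i, Matrix (Fin (d i)) (Fin (d i)) ℂ)
    (C : ∀ i, Matrix (Fin (d (i+1))) (Fin (d i)) ℂ)
    (V : ∀ i, Matrix (Fin (d i)) (Fin (d i)) ℂ)
    (ev : ∀ i, Fin (d i) → ℂ) : ∀ i j : ℕ, Matrix (Fin (d i)) (Fin (d j)) ℂ
  | 0, 0 => 1
  | 0, _ + 1 => 0
  | i + 1, j =>
    if h : j = i + 1 then by subst h; exact 1
    else
      (L (i+1))⁻¹ * V (i+1) *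
        Matrix.of (fun ℓ m =>
          ((V (i+1))⁻¹ * C i * Dmat L C V ev i j * V j) ℓ m
            * (1 - ev j m / ev (i+1) ℓ)⁻¹) * (V j)⁻¹

/-- The perturbation maps `pert_i` of the paper (levels indexed from `0`). -/
def pert {d : ℕ → ℕ} (L : ∀ i, Matrix (Fin (d i)) (Fin (d i)) ℂ)
    (C : ∀ i, Matrix (Fin (d (i+1))) (Fin (d i)) ℂ)
    (V : ∀ i, Matrix (Fin (d i)) (Fin (d i)) ℂ)
    (ev : ∀ i, Fin (d i) → ℂ)
    (x : ∀ k, EuclideanSpace ℂ (Fin (d k))) : ∀ i : ℕ, EuclideanSpace ℂ (Fin (d i))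
  | 0 => x 0
  | i + 1 => x (i+1) + ∑ j ∈ (Finset.range (i+1)).attach,
      ((-1 : ℂ) ^ (i - j.1)) • matCLM (Dmat L C V ev (i+1) j.1) (pert L C V ev x j.1)
  termination_by i => i
  decreasing_by exact Finset.mem_range.mp j.2

/-- The `s`-th principal eigenfunction of component system `i`. -/
def psi {d : ℕ → ℕ} (V : ∀ i, Matrix (Fin (d i)) (Fin (d i)) ℂ) (i : ℕ) (s : Fin (d i)) :
    EuclideanSpace ℂ (Fin (d i)) →L[ℂ] ℂ :=
  (EuclideanSpace.proj s).comp (matCLM (V i)⁻¹)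

lemma matCLM_mul {p q r : ℕ} (M : Matrix (Fin p) (Fin q) ℂ) (N : Matrix (Fin q) (Fin r) ℂ)
    (v : EuclideanSpace ℂ (Fin r)) : matCLM (M * N) v = matCLM M (matCLM N v) := by
  ext k
  simp [matCLM, Matrix.toLpLin_apply, Matrix.mulVec_mulVec]

lemma matCLM_sub {p q : ℕ} (M N : Matrix (Fin p) (Fin q) ℂ)
    (v : EuclideanSpace ℂ (Fin q)) : matCLM (M - N) v = matCLM M v - matCLM N v := by
  ext k
  simp [matCLM, Matrix.toLpLin_apply]

lemma matCLM_one {p : ℕ} (v : EuclideanSpace ℂ (Fin p)) :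
    matCLM (1 : Matrix (Fin p) (Fin p) ℂ) v = v := by
  ext k
  simp [matCLM]

lemma matCLM_diagonal {p : ℕ} (e : Fin p → ℂ) (v : EuclideanSpace ℂ (Fin p)) (s : Fin p) :
    matCLM (Matrix.diagonal e) v s = e s * v s := by
  simp [matCLM, Matrix.toLpLin_apply, Matrix.mulVec_diagonal]

section Cascade

variable {d : ℕ → ℕ} (L : ∀ i, Matrix (Fin (d i)) (Fin (d i)) ℂ)
  (C : ∀ i, Matrix (Fin (d (i+1))) (Fin (d i)) ℂ)
  (V : ∀ i, Matrix (Fin (d i)) (Fin (d i)) ℂ)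
  (ev : ∀ i, Fin (d i) → ℂ)

lemma Dmat_self (i : ℕ) : Dmat L C V ev i i = 1 := by
  cases i <;> simp [Dmat]

lemma pert_succ (x : ∀ k, EuclideanSpace ℂ (Fin (d k))) (i : ℕ) :
    pert L C V ev x (i+1) = x (i+1) + ∑ j ∈ Finset.range (i+1),
      ((-1 : ℂ) ^ (i - j)) • matCLM (Dmat L C V ev (i+1) j) (pert L C V ev x j) := by
  rw [pert]
  congr 1
  exact Finset.sum_attach (Finset.range (i+1))
    (fun j => ((-1 : ℂ) ^ (i - j)) • matCLM (Dmat L C V ev (i+1) j) (pert L C V ev x j))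

/-- The inverse of the perturbation map. -/
lemma sum_pert (x : ∀ k, EuclideanSpace ℂ (Fin (d k))) (i : ℕ) :
    ∑ j ∈ Finset.range (i+1),
      ((-1 : ℂ) ^ (i - j)) • matCLM (Dmat L C V ev i j) (pert L C V ev x j) = x i := by
  rw [Finset.sum_range_succ, Dmat_self, matCLM_one]
  cases i with
  | zero => simp [pert]
  | succ i =>
    have h : ∀ j ∈ Finset.range (i+1),
        ((-1 : ℂ) ^ (i + 1 - j)) • matCLM (Dmat L C V ev (i+1) j) (pert L C V ev x j)
        = -(((-1 : ℂ) ^ (i - j)) • matCLM (Dmat L C V ev (i+1) j) (pert L C V ev x j)) := by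
      intro j hj
      rw [Nat.succ_sub (Nat.lt_succ_iff.mp (Finset.mem_range.mp hj)), pow_succ, mul_neg_one,
        neg_smul]
    rw [Finset.sum_congr rfl h, Finset.sum_neg_distrib, pert_succ]
    simp

variable {L V ev}

lemma inv_mul_V (hV : ∀ i, IsUnit (V i)) (i : ℕ) : (V i)⁻¹ * V i = 1 :=
  Matrix.nonsing_inv_mul _ ((Matrix.isUnit_iff_isUnit_det _).mp (hV i))

lemma inv_mul_L (hdiag : ∀ i, L i = V i * Matrix.diagonal (ev i) * (V i)⁻¹)
    (hV : ∀ i, IsUnit (V i)) (i : ℕ) : (V i)⁻¹ * L i = Matrix.diagonal (ev i) * (V i)⁻¹ := by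
  rw [hdiag, ← Matrix.mul_assoc, ← Matrix.mul_assoc, inv_mul_V hV, Matrix.one_mul]

lemma ev_ne_zero (hdiag : ∀ i, L i = V i * Matrix.diagonal (ev i) * (V i)⁻¹)
    (hLu : ∀ i, IsUnit (L i)) (i : ℕ) (s : Fin (d i)) : ev i s ≠ 0 := by
  have h := ((Matrix.isUnit_iff_isUnit_det _).mp (hLu i)).ne_zero
  rw [hdiag, Matrix.det_mul, Matrix.det_mul, Matrix.det_diagonal] at h
  exact Finset.prod_ne_zero_iff.mp (right_ne_zero_of_mul (left_ne_zero_of_mul h)) s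
    (Finset.mem_univ s)

/-- `D_{i+1,j}` solves the Sylvester equation with right-hand side `C_i D_{i,j}`. -/
lemma Dmat_sylvester (hdiag : ∀ i, L i = V i * Matrix.diagonal (ev i) * (V i)⁻¹)
    (hV : ∀ i, IsUnit (V i)) (hLu : ∀ i, IsUnit (L i))
    (hsp : ∀ i j : ℕ, i ≠ j → ∀ ℓ m, ev i ℓ ≠ ev j m) {i j : ℕ} (hj : j ≤ i) :
    Dmat L C V ev (i+1) j * L j
      = L (i+1) * Dmat L C V ev (i+1) j - C i * Dmat L C V ev i j := by
  have hne : j ≠ i + 1 := by omega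
  have hL := Matrix.mul_nonsing_inv _ ((Matrix.isUnit_iff_isUnit_det _).mp (hLu (i+1)))
  have hVV : ∀ k, V k * (V k)⁻¹ = 1 := fun k =>
    Matrix.mul_nonsing_inv _ ((Matrix.isUnit_iff_isUnit_det _).mp (hV k))
  set B := (V (i+1))⁻¹ * C i * Dmat L C V ev i j * V j with hB
  set T : Matrix (Fin (d (i+1))) (Fin (d j)) ℂ :=
    Matrix.of (fun ℓ m => B ℓ m * (1 - ev j m / ev (i+1) ℓ)⁻¹) with hT
  have hD : Dmat L C V ev (i+1) j = (L (i+1))⁻¹ * V (i+1) * T * (V j)⁻¹ := by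
    rw [Dmat, dif_neg hne]
  -- The Sylvester equation in eigencoordinates, multiplied on the left by `diagonal (ev (i+1))`
  -- to clear the factor `(L (i+1))⁻¹`.
  have key : T * Matrix.diagonal (ev j)
      = Matrix.diagonal (ev (i+1)) * T - Matrix.diagonal (ev (i+1)) * B := by
    ext ℓ m
    have h0 := ev_ne_zero hdiag hLu (i+1) ℓ
    have h1 : ev (i+1) ℓ - ev j m ≠ 0 := sub_ne_zero.mpr (hsp _ _ hne.symm ℓ m)
    have h2 : (1 - ev j m / ev (i+1) ℓ)⁻¹ = ev (i+1) ℓ / (ev (i+1) ℓ - ev j m) := by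
      rw [one_sub_div h0, inv_div]
    simp only [Matrix.mul_diagonal, Matrix.sub_apply, Matrix.diagonal_mul, hT, Matrix.of_apply, h2]
    field_simp
    ring
  have hLV : L (i+1) * V (i+1) = V (i+1) * Matrix.diagonal (ev (i+1)) := by
    rw [hdiag, Matrix.mul_assoc, inv_mul_V hV, Matrix.mul_one]
  have hCB : C i * Dmat L C V ev i j = V (i+1) * B * (V j)⁻¹ := by
    rw [hB]
    simp only [Matrix.mul_assoc, hVV, Matrix.mul_one]
    rw [← Matrix.mul_assoc, hVV, Matrix.one_mul]
  -- It suffices to check the equation after left multiplication by the invertible `L (i+1)`.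
  have hcancel : ∀ M N : Matrix (Fin (d (i+1))) (Fin (d j)) ℂ,
      L (i+1) * M = L (i+1) * N → M = N := by
    intro M N h
    have hL' := Matrix.nonsing_inv_mul _ ((Matrix.isUnit_iff_isUnit_det _).mp (hLu (i+1)))
    rw [← Matrix.one_mul M, ← Matrix.one_mul N, ← hL', Matrix.mul_assoc, h, Matrix.mul_assoc]
  apply hcancel
  have hLD : L (i+1) * Dmat L C V ev (i+1) j = V (i+1) * T * (V j)⁻¹ := by
    rw [hD, ← Matrix.mul_assoc, ← Matrix.mul_assoc, ← Matrix.mul_assoc, hL, Matrix.one_mul]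
  calc L (i+1) * (Dmat L C V ev (i+1) j * L j)
      = V (i+1) * T * ((V j)⁻¹ * L j) := by
        rw [← Matrix.mul_assoc, hLD, Matrix.mul_assoc]
    _ = V (i+1) * (T * Matrix.diagonal (ev j)) * (V j)⁻¹ := by
        rw [inv_mul_L hdiag hV]
        simp only [Matrix.mul_assoc]
    _ = V (i+1) * Matrix.diagonal (ev (i+1)) * (T - B) * (V j)⁻¹ := by
        rw [key, ← Matrix.mul_sub, ← Matrix.mul_assoc (V (i+1))]
    _ = L (i+1) * (V (i+1) * T * (V j)⁻¹ - V (i+1) * B * (V j)⁻¹) := by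
        rw [← hLV, ← Matrix.sub_mul, ← Matrix.mul_sub]
        simp only [Matrix.mul_assoc]
    _ = _ := by rw [hLD, hCB]

/-- The perturbation maps conjugate the cascade to the decoupled system. -/
lemma pert_linStep (hdiag : ∀ i, L i = V i * Matrix.diagonal (ev i) * (V i)⁻¹)
    (hV : ∀ i, IsUnit (V i)) (hLu : ∀ i, IsUnit (L i))
    (hsp : ∀ i j : ℕ, i ≠ j → ∀ ℓ m, ev i ℓ ≠ ev j m)
    (x : ∀ k, EuclideanSpace ℂ (Fin (d k))) (i : ℕ) :
    pert L C V ev (LinStep L C x) i = matCLM (L i) (pert L C V ev x i) := by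
  induction i using Nat.strong_induction_on with
  | _ i ih =>
    cases i with
    | zero => simp [pert, LinStep]
    | succ i =>
      have h : ∀ j ∈ Finset.range (i+1),
          ((-1 : ℂ) ^ (i - j)) • matCLM (Dmat L C V ev (i+1) j)
              (pert L C V ev (LinStep L C x) j)
            = matCLM (L (i+1)) (((-1 : ℂ) ^ (i - j)) •
                matCLM (Dmat L C V ev (i+1) j) (pert L C V ev x j))
              - matCLM (C i) (((-1 : ℂ) ^ (i - j)) •
                matCLM (Dmat L C V ev i j) (pert L C V ev x j)) := by
        intro j hj
        have hj' := Finset.mem_range.mp hj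
        rw [ih j hj', ← matCLM_mul, Dmat_sylvester C hdiag hV hLu hsp (Nat.lt_succ_iff.mp hj'),
          matCLM_sub, matCLM_mul, matCLM_mul, smul_sub, map_smul, map_smul]
      rw [pert_succ, Finset.sum_congr rfl h, Finset.sum_sub_distrib, ← map_sum, ← map_sum,
        sum_pert, pert_succ, map_add]
      simp only [LinStep]
      abel

end Cascade

/-- principal eigenfunctions composed with the perturbation map are Koopman
eigenfunctions of the chained linear cascade, Condition (★) in full. Levels are indexed
from `0`. With `φ(x) = ψ_{i,s_i}(pert_i(x))`, we have `φ(Lin(x)) = λ_{i,s_i} φ(x)`. -/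
theorem stmt10 {d : ℕ → ℕ} (L : ∀ i, Matrix (Fin (d i)) (Fin (d i)) ℂ)
    (C : ∀ i, Matrix (Fin (d (i+1))) (Fin (d i)) ℂ)
    (V : ∀ i, Matrix (Fin (d i)) (Fin (d i)) ℂ)
    (ev : ∀ i, Fin (d i) → ℂ)
    (hdiag : ∀ i, L i = V i * Matrix.diagonal (ev i) * (V i)⁻¹)
    (hV : ∀ i, IsUnit (V i))
    (hLu : ∀ i, IsUnit (L i))
    (hsp : ∀ i j : ℕ, i ≠ j → ∀ ℓ m, ev i ℓ ≠ ev j m)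
    (hmono : ∀ i, opN (L i) < opN (L (i+1)))
    (hone : ∀ i, opN (L i) ≤ 1)
    (i : ℕ) (s : Fin (d i)) (x : ∀ k, EuclideanSpace ℂ (Fin (d k))) :
    psi V i s (pert L C V ev (LinStep L C x) i)
      = ev i s * psi V i s (pert L C V ev x i) := by
  rw [pert_linStep C hdiag hV hLu hsp]
  simp only [psi, ContinuousLinearMap.comp_apply]
  rw [← matCLM_mul, inv_mul_L hdiag hV, matCLM_mul]
  exact matCLM_diagonal _ _ s
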